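/- The group Sp(2g, ℤ) acts properly discontinuously on the Siegel upper half space ℌ_g: for every compact subset K of ℌ_g, the set of γ ∈ Sp(2g, ℤ) such that (γ · K) ∩ K is nonempty is finite, where γ = (a b; c d) acts by γ · Ω = (aΩ + b)(cΩ + d)⁻¹. -/

import Mathlib

/-!
Write `Ω' = γ • Ω`, `P = aΩ + b` and `Q = cΩ + d`, with `Ω` and `Ω'` in `K`. The symplectic
relations give `QᴴP - PᴴQ = Ω - Ωᴴ` (`symplectic_identity`). Since `P = Ω'Q`, the diagonal entries
of this identity say that every column `q` of `Q` satisfies `Im (q* Ω' q) = Im Ω_jj`. The form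
`q ↦ Im (q* Ω' q)` is positive definite, hence by compactness bounded below by `ε ‖q‖ ^ 2`
uniformly in `Ω' ∈ K`, while `Im Ω_jj` is bounded above on `K`. So `Q`, and then `P = Ω'Q`, is
bounded in terms of `K` alone.

The rows of `P` and `Q` are the images of the rows of `γ` under `(c, d) ↦ cΩ + d`, an injective
real-linear map depending continuously on `Ω`. A second compactness argument bounds the rows
of `γ`, and there are only finitely many integer matrices with bounded entries. Both compactness
arguments are instances of `exists_uniform_quadratic_lower_bound`.
-/

open Matrix

/-- The Siegel upper half space of genus `g`. -/
def SiegelUpperHalfSpace (g : ℕ) : Set (Matrix (Fin g) (Fin g) ℂ) :=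
  {Ω | Ωᵀ = Ω ∧ (Ω.map Complex.im).PosDef}

/-- The matrix `J = (0 I; -I 0)` over `ℤ`. -/
def Jmat (g : ℕ) : Matrix (Fin g ⊕ Fin g) (Fin g ⊕ Fin g) ℤ :=
  fromBlocks 0 1 (-1) 0

/-- The action of an integral `2g × 2g` matrix `γ = (a b; c d)` on `g × g` complex
matrices, `γ • Ω = (aΩ + b)(cΩ + d)⁻¹`. -/
noncomputable def siegelActZ {g : ℕ} (γ : Matrix (Fin g ⊕ Fin g) (Fin g ⊕ Fin g) ℤ)
    (Ω : Matrix (Fin g) (Fin g) ℂ) : Matrix (Fin g) (Fin g) ℂ :=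
  (γ.toBlocks₁₁.map (Int.cast : ℤ → ℂ) * Ω + γ.toBlocks₁₂.map (Int.cast : ℤ → ℂ)) *
    (γ.toBlocks₂₁.map (Int.cast : ℤ → ℂ) * Ω + γ.toBlocks₂₂.map (Int.cast : ℤ → ℂ))⁻¹

/-- A function that is quadratic in its second variable and positive off zero over a compact
parameter set dominates `ε * ‖v‖ ^ 2` uniformly: `ε` is its minimum over the unit sphere. -/
lemma exists_uniform_quadratic_lower_bound {X E : Type*} [TopologicalSpace X]
    [NormedAddCommGroup E] [NormedSpace ℝ E] [FiniteDimensional ℝ E]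
    (K : Set X) (hK : IsCompact K) (f : X → E → ℝ)
    (hf : Continuous fun p : X × E => f p.1 p.2)
    (hsmul : ∀ x (t : ℝ) v, f x (t • v) = t ^ 2 * f x v)
    (hpos : ∀ x ∈ K, ∀ v, v ≠ 0 → 0 < f x v) :
    ∃ ε > 0, ∀ x ∈ K, ∀ v, ε * ‖v‖ ^ 2 ≤ f x v := by
  have hprop : ProperSpace E := FiniteDimensional.proper ℝ E
  have hc : IsCompact (K ×ˢ Metric.sphere (0 : E) 1) := hK.prod (isCompact_sphere 0 1)
  obtain ⟨ε, hε, hmin⟩ : ∃ ε > 0, ∀ p ∈ K ×ˢ Metric.sphere (0 : E) 1, ε ≤ f p.1 p.2 := by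
    rcases (K ×ˢ Metric.sphere (0 : E) 1).eq_empty_or_nonempty with h | h
    · exact ⟨1, one_pos, by simp [h]⟩
    · obtain ⟨p, hp, hle⟩ := hc.exists_isMinOn h hf.continuousOn
      refine ⟨f p.1 p.2, hpos _ hp.1 _ ?_, fun q hq => hle hq⟩
      exact ne_zero_of_mem_unit_sphere ⟨p.2, hp.2⟩
  refine ⟨ε, hε, fun x hx v => ?_⟩
  by_cases hv : v = 0
  · have := hsmul x 0 0
    subst hv
    simp at this
    simp [this]
  · have hn : ‖v‖ ≠ 0 := norm_ne_zero_iff.2 hv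
    have h1 := hmin (x, ‖v‖⁻¹ • v) ⟨hx, by simp [norm_smul, hn]⟩
    have h2 := hsmul x ‖v‖ (‖v‖⁻¹ • v)
    rw [smul_smul, mul_inv_cancel₀ hn, one_smul] at h2
    rw [h2, mul_comm]
    exact mul_le_mul_of_nonneg_left h1 (sq_nonneg _)

/-- For symmetric `Ω = X + iY` and `w = u + iv` one has `Im (w* Ω w) = uᵀYu + vᵀYv`; the cross
terms in `X` cancel by symmetry. -/
lemma im_star_dotProduct_mulVec {g : ℕ} {Ω : Matrix (Fin g) (Fin g) ℂ} (hΩ : Ωᵀ = Ω)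
    (w : Fin g → ℂ) :
    (star w ⬝ᵥ Ω *ᵥ w).im =
      (fun i => (w i).re) ⬝ᵥ Ω.map Complex.im *ᵥ (fun i => (w i).re) +
      (fun i => (w i).im) ⬝ᵥ Ω.map Complex.im *ᵥ (fun i => (w i).im) := by
  have hcross : ∑ i, ∑ j, (w i).re * (Ω i j).re * (w j).im =
      ∑ i, ∑ j, (w i).im * (Ω i j).re * (w j).re := by
    rw [Finset.sum_comm]
    refine Finset.sum_congr rfl fun i _ => Finset.sum_congr rfl fun j _ => ?_
    have : Ω j i = Ω i j := congrFun (congrFun hΩ i) j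
    rw [this]; ring
  have hl : (star w ⬝ᵥ Ω *ᵥ w).im =
      ∑ i, ∑ j, ((w i).re * ((Ω i j).im * (w j).re) + (w i).im * ((Ω i j).im * (w j).im)) +
      (∑ i, ∑ j, (w i).re * (Ω i j).re * (w j).im -
        ∑ i, ∑ j, (w i).im * (Ω i j).re * (w j).re) := by
    simp only [dotProduct, mulVec, Finset.mul_sum, Complex.im_sum, ← Finset.sum_sub_distrib,
      ← Finset.sum_add_distrib]
    refine Finset.sum_congr rfl fun i _ => Finset.sum_congr rfl fun j _ => ?_
    simp
    ring
  rw [hl, hcross, sub_self, add_zero]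
  simp only [dotProduct, mulVec, Finset.mul_sum, ← Finset.sum_add_distrib, Matrix.map_apply]

lemma im_star_dotProduct_mulVec_pos {g : ℕ} {Ω : Matrix (Fin g) (Fin g) ℂ}
    (hΩ : Ω ∈ SiegelUpperHalfSpace g) {w : Fin g → ℂ} (hw : w ≠ 0) :
    0 < (star w ⬝ᵥ Ω *ᵥ w).im := by
  rw [im_star_dotProduct_mulVec hΩ.1]
  have hnn (u : Fin g → ℝ) : 0 ≤ u ⬝ᵥ Ω.map Complex.im *ᵥ u := by
    simpa using hΩ.2.posSemidef.dotProduct_mulVec_nonneg u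
  have hp (u : Fin g → ℝ) (hu : u ≠ 0) : 0 < u ⬝ᵥ Ω.map Complex.im *ᵥ u := by
    simpa using hΩ.2.dotProduct_mulVec_pos hu
  by_cases hr : (fun i => (w i).re) = 0
  · refine add_pos_of_nonneg_of_pos (hnn _) (hp _ fun hi => hw ?_)
    funext i
    exact Complex.ext (congrFun hr i) (congrFun hi i)
  · exact add_pos_of_pos_of_nonneg (hp _ hr) (hnn _)

/-- The linear map `(c, d) ↦ cΩ + d` on real row vectors. -/
def rowForm {g : ℕ} (Ω : Matrix (Fin g) (Fin g) ℂ) (v : (Fin g → ℝ) × (Fin g → ℝ)) :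
    Fin g → ℂ :=
  fun j => ∑ k, (v.1 k : ℂ) * Ω k j + (v.2 j : ℂ)

/-- The map `(c, d) ↦ cΩ + d` is injective on real vectors: the imaginary part `cY` determines
`c` because `Y` is definite. -/
lemma rowForm_ne_zero {g : ℕ} {Ω : Matrix (Fin g) (Fin g) ℂ}
    (hΩ : Ω ∈ SiegelUpperHalfSpace g) {v : (Fin g → ℝ) × (Fin g → ℝ)} (hv : v ≠ 0) :
    rowForm Ω v ≠ 0 := by
  intro h
  have hY : v.1 ᵥ* Ω.map Complex.im = 0 := by
    funext j
    simpa [rowForm, vecMul, dotProduct] using congrArg Complex.im (congrFun h j)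
  have h1 : v.1 = 0 := by
    by_contra hne
    have hp := hΩ.2.dotProduct_mulVec_pos hne
    rw [dotProduct_mulVec, star_trivial, hY, zero_dotProduct] at hp
    exact lt_irrefl _ hp
  have h2 : v.2 = 0 := by
    funext j
    simpa [rowForm, h1] using congrArg Complex.re (congrFun h j)
  exact hv (Prod.ext h1 h2)

/-- With `P = aΩ + b` and `Q = cΩ + d`, the symplectic relations give
`QᴴP - PᴴQ = Ω - Ωᴴ`. -/
lemma symplectic_identity {g : ℕ} (γ : Matrix (Fin g ⊕ Fin g) (Fin g ⊕ Fin g) ℤ)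
    (hγ : γᵀ * Jmat g * γ = Jmat g) (Ω : Matrix (Fin g) (Fin g) ℂ)
    (P Q : Matrix (Fin g) (Fin g) ℂ)
    (hP : P = γ.toBlocks₁₁.map (Int.cast : ℤ → ℂ) * Ω + γ.toBlocks₁₂.map (Int.cast : ℤ → ℂ))
    (hQ : Q = γ.toBlocks₂₁.map (Int.cast : ℤ → ℂ) * Ω + γ.toBlocks₂₂.map (Int.cast : ℤ → ℂ)) :
    Qᴴ * P - Pᴴ * Q = Ω - Ωᴴ := by
  obtain ⟨a, b, c, d, rfl⟩ : ∃ a b c d, γ = fromBlocks a b c d :=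
    ⟨_, _, _, _, (fromBlocks_toBlocks γ).symm⟩
  simp only [toBlocks_fromBlocks₁₁, toBlocks_fromBlocks₁₂, toBlocks_fromBlocks₂₁,
    toBlocks_fromBlocks₂₂] at hP hQ
  simp only [Jmat, fromBlocks_transpose, fromBlocks_multiply, mul_zero, mul_one, zero_add,
    add_zero, mul_neg, neg_mul] at hγ
  obtain ⟨h11, h12, h21, h22⟩ := fromBlocks_inj.1 hγ
  have cst (m n p q r : Matrix (Fin g) (Fin g) ℤ) (h : -(mᵀ * n) + pᵀ * q = r) :
      -((m.map (Int.cast : ℤ → ℂ))ᴴ * n.map (Int.cast : ℤ → ℂ)) +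
        (p.map (Int.cast : ℤ → ℂ))ᴴ * q.map (Int.cast : ℤ → ℂ) = r.map (Int.cast : ℤ → ℂ) := by
    subst h
    ext i j
    simp [Matrix.mul_apply]
  have e11 := cst _ _ _ _ _ h11
  have e12 := cst _ _ _ _ _ h12
  have e21 := cst _ _ _ _ _ h21
  have e22 := cst _ _ _ _ _ h22
  have z : (0 : Matrix (Fin g) (Fin g) ℤ).map (Int.cast : ℤ → ℂ) = 0 := by ext; simp
  have o : (1 : Matrix (Fin g) (Fin g) ℤ).map (Int.cast : ℤ → ℂ) = 1 := by
    simp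
  have o' : (-1 : Matrix (Fin g) (Fin g) ℤ).map (Int.cast : ℤ → ℂ) = -1 := by
    rw [← o]; ext; simp only [map_apply, Matrix.neg_apply, Int.cast_neg]
  rw [z] at e11 e22
  rw [o] at e12
  rw [o'] at e21
  generalize a.map (Int.cast : ℤ → ℂ) = A at *
  generalize b.map (Int.cast : ℤ → ℂ) = B at *
  generalize c.map (Int.cast : ℤ → ℂ) = C at *
  generalize d.map (Int.cast : ℤ → ℂ) = D at *
  subst hP hQ
  have key : (C * Ω + D)ᴴ * (A * Ω + B) - (A * Ω + B)ᴴ * (C * Ω + D) =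
      -(Ωᴴ * (-(Cᴴ * A) + Aᴴ * C) * Ω) - Ωᴴ * (-(Cᴴ * B) + Aᴴ * D)
        - (-(Dᴴ * A) + Bᴴ * C) * Ω - (-(Dᴴ * B) + Bᴴ * D) := by
    simp only [conjTranspose_add, conjTranspose_mul]
    noncomm_ring
  rw [key, e11, e12, e21, e22]
  noncomm_ring

/-- `Sp(2g, ℤ)` acts properly discontinuously on `ℌ_g`: for every compact subset `K` of
`ℌ_g`, only finitely many `γ ∈ Sp(2g, ℤ)` satisfy `(γ • K) ∩ K ≠ ∅`. -/
theorem sp_action_properly_discontinuous (g : ℕ) (K : Set (Matrix (Fin g) (Fin g) ℂ))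
    (hK : K ⊆ SiegelUpperHalfSpace g) (hKc : IsCompact K) :
    {γ : Matrix (Fin g ⊕ Fin g) (Fin g ⊕ Fin g) ℤ |
      γᵀ * Jmat g * γ = Jmat g ∧ ∃ Ω ∈ K, siegelActZ γ Ω ∈ K}.Finite := by
  obtain ⟨ε, hε, hmin⟩ := exists_uniform_quadratic_lower_bound K hKc
    (fun Ω (w : Fin g → ℂ) => (star w ⬝ᵥ Ω *ᵥ w).im) (by fun_prop)
    (fun Ω t w => by
      have : star (t • w) = t • star w := by ext; simp
      simp only [this, mulVec_smul, dotProduct_smul, smul_dotProduct, Complex.smul_im, smul_eq_mul]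
      ring)
    (fun Ω hΩ w hw => im_star_dotProduct_mulVec_pos (hK hΩ) hw)
  obtain ⟨δ, hδ, hrow⟩ := exists_uniform_quadratic_lower_bound K hKc
    (fun Ω (v : (Fin g → ℝ) × (Fin g → ℝ)) => ‖rowForm Ω v‖ ^ 2)
    (by unfold rowForm; fun_prop)
    (fun Ω t v => by
      have : rowForm Ω (t • v) = t • rowForm Ω v := by
        ext j
        simp [rowForm, Finset.mul_sum, mul_assoc]
      rw [this, norm_smul, mul_pow, Real.norm_eq_abs, sq_abs])
    (fun Ω hΩ v hv => by
      have := norm_pos_iff.2 (rowForm_ne_zero (hK hΩ) hv)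
      positivity)
  obtain ⟨C, hC⟩ : ∃ C : ℝ, ∀ Ω ∈ K, ∀ i j, ‖Ω i j‖ ≤ C := by
    have h (i j : Fin g) : ∃ C : ℝ, ∀ Ω ∈ K, ‖Ω i j‖ ≤ C :=
      hKc.exists_bound_of_continuousOn (f := fun Ω : Matrix (Fin g) (Fin g) ℂ => Ω i j)
        (by fun_prop)
    choose C hC using h
    refine ⟨∑ i, ∑ j, |C i j|, fun Ω hΩ i j => ((hC i j Ω hΩ).trans (le_abs_self _)).trans ?_⟩
    refine le_trans ?_ (Finset.single_le_sum (f := fun i => ∑ j, |C i j|)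
      (fun i _ => Finset.sum_nonneg fun j _ => abs_nonneg _) (Finset.mem_univ i))
    exact Finset.single_le_sum (f := fun j => |C i j|) (fun j _ => abs_nonneg _)
      (Finset.mem_univ j)
  -- `B` bounds the entries of `Q`, `g * (C * B)` those of `P`, and `R` those of `γ`.
  set B : ℝ := √(C / ε) with hB
  set M : ℝ := max B (g * (C * B)) with hM
  set R : ℝ := √(M ^ 2 / δ) with hR
  have hfin : {γ : Matrix (Fin g ⊕ Fin g) (Fin g ⊕ Fin g) ℤ |
      ∀ i j, γ i j ∈ Set.Icc (-⌈R⌉) ⌈R⌉}.Finite :=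
    Set.Finite.pi' fun _ => Set.Finite.pi' fun _ => Set.finite_Icc _ _
  refine hfin.subset ?_
  rintro γ ⟨hγ, Ω, hΩ, hΩ'⟩
  rcases Nat.eq_zero_or_pos g with rfl | hg
  · intro i; exact (i.elim Fin.elim0 Fin.elim0)
  obtain ⟨P, hP⟩ : ∃ P, P = γ.toBlocks₁₁.map (Int.cast : ℤ → ℂ) * Ω +
    γ.toBlocks₁₂.map (Int.cast : ℤ → ℂ) := ⟨_, rfl⟩
  obtain ⟨Q, hQ⟩ : ∃ Q, Q = γ.toBlocks₂₁.map (Int.cast : ℤ → ℂ) * Ω +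
    γ.toBlocks₂₂.map (Int.cast : ℤ → ℂ) := ⟨_, rfl⟩
  obtain ⟨Ω', hdef⟩ : ∃ Ω', Ω' = siegelActZ γ Ω := ⟨_, rfl⟩
  rw [← hdef] at hΩ'
  have hPQ : Ω' = P * Q⁻¹ := by rw [hdef, siegelActZ, hP, hQ]
  have hdet : IsUnit Q.det := by
    -- otherwise `Q⁻¹ = 0`, so `Ω' = 0`, whose imaginary part is not positive definite
    by_contra hn
    rw [nonsing_inv_apply_not_isUnit Q hn, mul_zero] at hPQ
    have := im_star_dotProduct_mulVec_pos (hK hΩ') (w := fun _ => 1)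
      (fun h => one_ne_zero (congrFun h ⟨0, hg⟩))
    simp [hPQ] at this
  have hP' : P = Ω' * Q := by rw [hPQ, mul_assoc, nonsing_inv_mul Q hdet, mul_one]
  have hid := symplectic_identity γ hγ Ω P Q hP hQ
  have hcol (j : Fin g) : ε * ‖fun i => Q i j‖ ^ 2 ≤ C := by
    refine (hmin Ω' hΩ' _).trans ?_
    have h1 : (star (fun i => Q i j) ⬝ᵥ Ω' *ᵥ fun i => Q i j) = (Qᴴ * P) j j := by
      rw [hP']; rfl
    have h2 : ((Qᴴ * P) j j).im = (Ω j j).im := by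
      have h3 : Pᴴ * Q = (Qᴴ * P)ᴴ := by simp
      rw [h3] at hid
      have := congrArg Complex.im (congrFun (congrFun hid j) j)
      simp only [Matrix.sub_apply, conjTranspose_apply, Complex.sub_im, Complex.star_def,
        Complex.conj_im] at this
      linarith
    change (star (fun i => Q i j) ⬝ᵥ Ω' *ᵥ fun i => Q i j).im ≤ C
    rw [h1, h2]
    exact ((le_abs_self _).trans (Complex.abs_im_le_norm _)).trans (hC Ω hΩ j j)
  have hQB (i j : Fin g) : ‖Q i j‖ ≤ B := by
    refine (norm_le_pi_norm (fun i => Q i j) i).trans (Real.le_sqrt_of_sq_le ?_)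
    rw [le_div_iff₀' hε]
    exact hcol j
  have hB0 : 0 ≤ B := Real.sqrt_nonneg _
  have hPB (i j : Fin g) : ‖P i j‖ ≤ g * (C * B) := by
    rw [hP', Matrix.mul_apply]
    refine (norm_sum_le _ _).trans ((Finset.sum_le_card_nsmul _ _ (C * B) fun k _ => ?_).trans ?_)
    · rw [norm_mul]
      exact mul_le_mul (hC Ω' hΩ' i k) (hQB k j) (norm_nonneg _)
        ((norm_nonneg _).trans (hC Ω' hΩ' i k))
    · simp
  have hM0 : 0 ≤ M := hB0.trans (le_max_left _ _)
  have hbound (v : (Fin g → ℝ) × (Fin g → ℝ)) (hv : ∀ j, ‖rowForm Ω v j‖ ≤ M) : ‖v‖ ≤ R := by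
    refine Real.le_sqrt_of_sq_le ?_
    rw [le_div_iff₀' hδ]
    refine (hrow Ω hΩ v).trans ?_
    have := (pi_norm_le_iff_of_nonneg hM0).2 hv
    gcongr
  have hγrow (i : Fin g ⊕ Fin g) :
      ‖((fun k => (γ i (.inl k) : ℝ), fun k => (γ i (.inr k) : ℝ)) :
        (Fin g → ℝ) × (Fin g → ℝ))‖ ≤ R := by
    refine hbound _ fun j => ?_
    rcases i with i | i
    · have : rowForm Ω (fun k => (γ (.inl i) (.inl k) : ℝ), fun k => (γ (.inl i) (.inr k) : ℝ)) j
          = P i j := by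
        simp [rowForm, hP, Matrix.mul_apply, toBlocks₁₁, toBlocks₁₂]
      rw [this]
      exact (hPB i j).trans (le_max_right _ _)
    · have : rowForm Ω (fun k => (γ (.inr i) (.inl k) : ℝ), fun k => (γ (.inr i) (.inr k) : ℝ)) j
          = Q i j := by
        simp [rowForm, hQ, Matrix.mul_apply, toBlocks₂₁, toBlocks₂₂]
      rw [this]
      exact (hQB i j).trans (le_max_left _ _)
  have hentry (i j : Fin g ⊕ Fin g) : |(γ i j : ℝ)| ≤ R := by
    rcases j with j | j
    · exact (norm_le_pi_norm (fun k => (γ i (.inl k) : ℝ)) j).trans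
        ((le_max_left _ _).trans (hγrow i))
    · exact (norm_le_pi_norm (fun k => (γ i (.inr k) : ℝ)) j).trans
        ((le_max_right _ _).trans (hγrow i))
  intro i j
  refine Set.mem_Icc.2 (abs_le.1 ?_)
  exact_mod_cast (hentry i j).trans (Int.le_ceil R)
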